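/- Let M = (E, I) be a matroid with |E| = n. Suppose S ⊆ E satisfies: (1) α(S) ≤ |S|/(100·log n), where α(S) is the smallest ℓ such that a uniformly random ℓ-subset of S is independent with probability at most 1/2; and (2) for every x ∈ S, when elements of S are added in a uniformly random order until the first circuit appears, the probability that x belongs to this first circuit is at least 1/n^{10}. Then |S| − rank(S) = Ω(|S|/log n). -/

import Mathlib

open Finset

/-- A circuit of a matroid: a minimal dependent subset of the ground set. -/
def MCircuit {α : Type*} (M : Matroid α) (C : Set α) : Prop :=
  C ⊆ M.E ∧ ¬ M.Indep C ∧ ∀ x ∈ C, M.Indep (C \ {x})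

/-- The rank of a set in a matroid: the maximum cardinality of an independent subset. -/
noncomputable def mrank {α : Type*} (M : Matroid α) (S : Set α) : ℕ :=
  sSup {n | ∃ I : Set α, M.Indep I ∧ I ⊆ S ∧ I.ncard = n}

/-- The set of elements appearing among the first `t` positions of the enumeration `π`. -/
def prefixSet {α : Type*} {s : ℕ} (π : Fin s → α) (t : ℕ) : Set α :=
  {a | ∃ i : Fin s, (i : ℕ) < t ∧ π i = a}

/-- `x` belongs to the first circuit that appears when elements are added in the order
given by the enumeration `π`: there is a `t` such that the `(t-1)`-prefix is independent,
the `t`-prefix is dependent, and some circuit contained in the `t`-prefix contains `x`. -/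
def MemFirstCircuit {α : Type*} {s : ℕ} (M : Matroid α) (π : Fin s → α) (x : α) : Prop :=
  ∃ t : ℕ, t ≤ s ∧ M.Indep (prefixSet π (t - 1)) ∧ ¬ M.Indep (prefixSet π t) ∧
    ∃ C : Set α, MCircuit M C ∧ C ⊆ prefixSet π t ∧ x ∈ C

/-!
If a property of sets passes to subsets, the probability that the elements at `m` random positions
have it is submultiplicative in `m`. So a prefix of length `k * α(S)` of a random ordering is
independent with probability at most `2 ^ (-k)`, and for `k ≈ 11 * log n` this is at most half of
`n ^ (-10)`. Hence, with probability at least `2 ^ (-k)`, the first circuit contains `x` and lies in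
that prefix; in particular `x` is on a circuit avoiding all later positions, up to `x` itself. If
`d ≈ |S| / (20 * log n)`, there are at least `k * d` later positions, and submultiplicativity now
bounds from below by `1 / 2` the probability that `x` is on a circuit avoiding the elements at `d`
random positions. So on average at least half of `d` removed elements stay in the closure of what
remains, and these are at most `|S| - rank(S)` many.
-/

open scoped BigOperators

section UniformProb

variable {Ω Ω' : Type*} {s : Finset Ω} {p q : Ω → Prop}

open Classical in
/-- The probability that a uniformly random element of `s` satisfies `p`; it is `0` if `s` is
empty. -/
noncomputable def uniformProb (s : Finset Ω) (p : Ω → Prop) : ℝ :=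
  𝔼 ω ∈ s, if p ω then 1 else 0

lemma uniformProb_eq_card_div [DecidablePred p] :
    uniformProb s p = #{ω ∈ s | p ω} / #s := by
  rw [uniformProb, expect_eq_sum_div_card, ← sum_boole]
  congr!

lemma uniformProb_nonneg : 0 ≤ uniformProb s p :=
  expect_nonneg fun _ _ => by positivity

lemma uniformProb_mono (h : ∀ ω ∈ s, p ω → q ω) : uniformProb s p ≤ uniformProb s q :=
  expect_le_expect fun ω hω => by split_ifs <;> simp_all

lemma uniformProb_le_one : uniformProb s p ≤ 1 := by
  classical
  rw [uniformProb_eq_card_div]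
  exact div_le_one_of_le₀ (mod_cast card_filter_le s p) (by positivity)

lemma uniformProb_or_le :
    uniformProb s (fun ω => p ω ∨ q ω) ≤ uniformProb s p + uniformProb s q := by
  simp only [uniformProb, ← expect_add_distrib]
  refine expect_le_expect fun ω _ => ?_
  by_cases hp : p ω <;> by_cases hq : q ω <;> simp [hp, hq]

lemma uniformProb_map (f : Ω ↪ Ω') (p : Ω' → Prop) :
    uniformProb (s.map f) p = uniformProb s (p ∘ f) := by
  classical
  simp only [uniformProb_eq_card_div, filter_map, card_map]

lemma uniformProb_comp_equiv [Fintype Ω] [Fintype Ω'] (e : Ω ≃ Ω') (p : Ω' → Prop) :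
    uniformProb univ (fun ω => p (e ω)) = uniformProb univ p := by
  rw [← map_univ_equiv e, uniformProb_map]
  rfl

lemma uniformProb_le_half [DecidablePred p] (h : 2 * #{ω ∈ s | p ω} ≤ #s) :
    uniformProb s p ≤ 1 / 2 := by
  have h' : (2 : ℝ) * #{ω ∈ s | p ω} ≤ #s := mod_cast h
  rw [uniformProb_eq_card_div]
  exact div_le_of_le_mul₀ (by positivity) (by norm_num) (by linarith)

end UniformProb

section Placed

variable {ι α : Type*} {S : Finset α}

/-- The set of elements of `S` that the ordering `π` puts at the positions in `D`. -/
def placed (π : ι ≃ S) (D : Finset ι) : Finset α :=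
  D.map (π.toEmbedding.trans (Function.Embedding.subtype _))

lemma mem_placed {π : ι ≃ S} {D : Finset ι} {y : α} :
    y ∈ placed π D ↔ ∃ i ∈ D, (π i : α) = y := by
  simp [placed]

lemma apply_mem_placed {π : ι ≃ S} {D : Finset ι} {i : ι} : (π i : α) ∈ placed π D ↔ i ∈ D := by
  simp [mem_placed]

lemma placed_subset_placed {π : ι ≃ S} {D D' : Finset ι} (h : D ⊆ D') :
    placed π D ⊆ placed π D' :=
  map_subset_map.2 h

lemma placed_map (π : ι ≃ S) (τ : Equiv.Perm ι) (D : Finset ι) :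
    placed π (D.map τ.toEmbedding) = placed (τ.trans π) D := by
  rw [placed, map_map]
  rfl

lemma placed_union [DecidableEq ι] [DecidableEq α] (π : ι ≃ S) (X Y : Finset ι) :
    placed π (X ∪ Y) = placed π X ∪ placed π Y :=
  map_union _ _

lemma map_placed_powersetCard [Fintype ι] (π : ι ≃ S) (m : ℕ) :
    (powersetCard m univ).map
      (mapEmbedding (π.toEmbedding.trans (Function.Embedding.subtype _))).toEmbedding =
        powersetCard m S := by
  rw [← powersetCard_map, ← map_map, map_univ_equiv, univ_eq_attach, attach_map_val]

end Placed

section PlacedProb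

variable {ι α : Type*} [Fintype ι] [DecidableEq ι] [DecidableEq α] {S : Finset α}
  {P : Finset α → Prop}

/-- The probability that, in a uniformly random ordering of `S` by `ι`, the set of elements at the
positions in `D` satisfies `P`. -/
noncomputable def placedProb (S : Finset α) (P : Finset α → Prop) (D : Finset ι) : ℝ :=
  uniformProb univ fun π : ι ≃ S => P (placed π D)

lemma placedProb_map (τ : Equiv.Perm ι) (D : Finset ι) :
    placedProb S P (D.map τ.toEmbedding) = placedProb S P D := by
  simp only [placedProb, placed_map]
  exact uniformProb_comp_equiv (τ.symm.equivCongr (Equiv.refl S)) fun π => P (placed π D)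

lemma placedProb_congr_card {X Y : Finset ι} (h : #X = #Y) :
    placedProb S P X = placedProb S P Y := by
  let e : {x // x ∈ X} ≃ {x // x ∈ Y} := equivOfCardEq h
  have hXY : X.map e.extendSubtype.toEmbedding = Y := by
    refine eq_of_subset_of_card_le (fun y hy => ?_) (by simp [h])
    obtain ⟨x, hx, rfl⟩ := mem_map.1 hy
    exact e.extendSubtype_mem x hx
  rw [← hXY, placedProb_map]

lemma placedProb_anti (hP : Antitone P) {X Y : Finset ι} (h : #X ≤ #Y) :
    placedProb S P Y ≤ placedProb S P X := by
  obtain ⟨Z, hZY, hZX⟩ := exists_subset_card_eq h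
  rw [← placedProb_congr_card hZX]
  exact uniformProb_mono fun π _ => hP (placed_subset_placed hZY)

-- If `ρ` is a uniform permutation of the positions, then `X` and `ρ Y` are filled independently
-- by two uniform orderings, and their union has at most `#Z` positions.
lemma placedProb_le_mul (hP : Antitone P) {X Y Z : Finset ι} (h : #X + #Y ≤ #Z) :
    placedProb S P Z ≤ placedProb S P X * placedProb S P Y := by
  classical
  calc placedProb S P Z
      = 𝔼 _ρ : Equiv.Perm ι, placedProb S P Z := (Fintype.expect_const _).symm
    _ ≤ 𝔼 ρ : Equiv.Perm ι, placedProb S P (X ∪ Y.map ρ.toEmbedding) :=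
        expect_le_expect fun ρ _ => placedProb_anti hP <|
          (card_union_le _ _).trans (by rwa [card_map])
    _ = 𝔼 π : ι ≃ S, uniformProb univ fun ρ : Equiv.Perm ι =>
          P (placed π X ∪ placed (ρ.trans π) Y) := by
        simp only [placedProb, uniformProb, placed_union, placed_map]
        exact expect_comm _ _ _
    _ = 𝔼 π : ι ≃ S, uniformProb univ fun π' : ι ≃ S => P (placed π X ∪ placed π' Y) :=
        expect_congr rfl fun π _ => uniformProb_comp_equiv ((Equiv.refl ι).equivCongr π)
          fun π' => P (placed π X ∪ placed π' Y)
    _ ≤ 𝔼 π : ι ≃ S, 𝔼 π' : ι ≃ S,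
          (if P (placed π X) then 1 else 0) * (if P (placed π' Y) then 1 else 0) := by
        refine expect_le_expect fun π _ => expect_le_expect fun π' _ => ?_
        by_cases hXY : P (placed π X ∪ placed π' Y)
        · simp [hXY, hP subset_union_left hXY, hP subset_union_right hXY]
        · simp only [hXY, if_false]
          positivity
    _ = placedProb S P X * placedProb S P Y := (Fintype.expect_mul_expect _ _).symm

lemma placedProb_le_pow (hP : Antitone P) (X : Finset ι) (k : ℕ) {Z : Finset ι}
    (h : k * #X ≤ #Z) : placedProb S P Z ≤ placedProb S P X ^ k := by
  induction k generalizing Z with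
  | zero => exact uniformProb_le_one.trans_eq (pow_zero _).symm
  | succ k ih =>
    rw [add_one_mul] at h
    obtain ⟨Y, -, hY⟩ := exists_subset_card_eq (le_of_add_le_left h)
    calc placedProb S P Z ≤ placedProb S P Y * placedProb S P X :=
          placedProb_le_mul hP (by rwa [hY])
      _ ≤ placedProb S P X ^ k * placedProb S P X :=
          mul_le_mul_of_nonneg_right (ih hY.ge) uniformProb_nonneg
      _ = placedProb S P X ^ (k + 1) := (pow_succ _ _).symm

lemma placedProb_eq_uniformProb_powersetCard [Nonempty (ι ≃ S)] (D : Finset ι) :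
    placedProb S P D = uniformProb (powersetCard #D S) P := by
  calc placedProb S P D
      = 𝔼 Y ∈ powersetCard #D (univ : Finset ι), placedProb S P Y := by
        rw [expect_congr rfl fun Y hY => placedProb_congr_card (mem_powersetCard_univ.1 hY),
          expect_const ⟨D, mem_powersetCard_univ.2 rfl⟩]
    _ = 𝔼 π : ι ≃ S, uniformProb (powersetCard #D (univ : Finset ι)) fun Y => P (placed π Y) :=
        expect_comm _ _ _
    _ = 𝔼 _π : ι ≃ S, uniformProb (powersetCard #D S) P :=
        expect_congr rfl fun π _ => by
          rw [← map_placed_powersetCard π, uniformProb_map]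
          rfl
    _ = uniformProb (powersetCard #D S) P := Fintype.expect_const _

-- Swapping the position of `x` with `j` turns the event for a random `x` into the event for the
-- element at position `j`.
lemma expect_placedProb_le {Q : α → Finset α → Prop} (hQ : ∀ x, Antitone (Q x))
    (hQ_insert : ∀ x T, Q x T → Q x (insert x T)) {D : Finset ι} {j : ι} (hj : j ∈ D) :
    𝔼 x : S, placedProb S (Q x) D ≤ uniformProb univ fun π : ι ≃ S => Q (π j) (placed π D) := by
  classical
  have : Nonempty ι := ⟨j⟩
  have hswap (i : ι) (π : ι ≃ S) (h : Q (π i) (placed π D)) :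
      Q ((Equiv.swap i j).trans π j) (placed ((Equiv.swap i j).trans π) D) := by
    rw [Equiv.trans_apply, Equiv.swap_apply_right]
    refine hQ _ (fun y hy => ?_) (hQ_insert _ _ h)
    obtain ⟨l, hl, rfl⟩ := mem_placed.1 hy
    simp only [Equiv.trans_apply, mem_insert, apply_mem_placed, Subtype.val_inj,
      EmbeddingLike.apply_eq_iff_eq]
    rcases eq_or_ne l i with rfl | hli
    · exact .inr (by rwa [Equiv.swap_apply_left])
    rcases eq_or_ne l j with rfl | hlj
    · exact .inl (Equiv.swap_apply_right _ _)
    · exact .inr (by rwa [Equiv.swap_apply_of_ne_of_ne hli hlj])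
  calc 𝔼 x : S, placedProb S (Q x) D
      = 𝔼 π : ι ≃ S, uniformProb univ fun x : S => Q x (placed π D) := expect_comm _ _ _
    _ = 𝔼 π : ι ≃ S, uniformProb univ fun i => Q (π i) (placed π D) :=
        expect_congr rfl fun π _ => (uniformProb_comp_equiv π fun x => Q x (placed π D)).symm
    _ = 𝔼 i, uniformProb univ fun π : ι ≃ S => Q (π i) (placed π D) := expect_comm _ _ _
    _ ≤ 𝔼 _i : ι, uniformProb univ fun π : ι ≃ S => Q (π j) (placed π D) := by
        refine expect_le_expect fun i _ => ?_
        rw [← uniformProb_comp_equiv ((Equiv.swap i j).symm.equivCongr (Equiv.refl S))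
          fun π => Q (π j) (placed π D)]
        exact uniformProb_mono fun π _ => hswap i π
    _ = uniformProb univ fun π : ι ≃ S => Q (π j) (placed π D) := Fintype.expect_const _

end PlacedProb

section Matroid

variable {α : Type*} {M : Matroid α} {S : Finset α}

lemma MCircuit.isCircuit {C : Set α} (hC : MCircuit M C) : M.IsCircuit C :=
  Matroid.isCircuit_iff_dep_forall_sdiff_singleton_indep.2 ⟨⟨hC.2.1, hC.1⟩, hC.2.2⟩

/-- Some circuit of `M` through `x` avoids `T`, except possibly at `x` itself: this is the way in
which `x` can remain spanned after the removal of `T`. -/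
def OnCircuitAvoiding (M : Matroid α) (x : α) (T : Finset α) : Prop :=
  ∃ C, M.IsCircuit C ∧ x ∈ C ∧ ∀ y ∈ C, y ∈ T → y = x

lemma OnCircuitAvoiding.antitone (M : Matroid α) (x : α) : Antitone (OnCircuitAvoiding M x) :=
  fun _ _ hT ⟨C, hC, hxC, hCT⟩ => ⟨C, hC, hxC, fun y hy hyT => hCT y hy (hT hyT)⟩

lemma OnCircuitAvoiding.insert_self [DecidableEq α] {x : α} {T : Finset α}
    (h : OnCircuitAvoiding M x T) : OnCircuitAvoiding M x (insert x T) := by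
  obtain ⟨C, hC, hxC, hCT⟩ := h
  exact ⟨C, hC, hxC, fun y hy hyT => (mem_insert.1 hyT).elim id (hCT y hy)⟩

lemma antitone_indep (M : Matroid α) : Antitone fun T : Finset α => M.Indep (T : Set α) :=
  fun _ _ hT h => h.subset (coe_subset.2 hT)

lemma prefixSet_mono {s : ℕ} (π : Fin s → α) : Monotone (prefixSet π) := by
  rintro t u htu _ ⟨i, hi, rfl⟩
  exact ⟨i, hi.trans_le htu, rfl⟩

lemma MemFirstCircuit.indep_or_onCircuitAvoiding {s : ℕ} {π : Fin s → α} {x : α}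
    (h : MemFirstCircuit M π x) (L : ℕ) {T : Finset α} (hT : ∀ y ∈ prefixSet π L, y ∉ T) :
    M.Indep (prefixSet π L) ∨ OnCircuitAvoiding M x T := by
  obtain ⟨t, -, hindep, -, C, hC, hCt, hxC⟩ := h
  rcases le_or_gt t L with htL | hLt
  · exact .inr ⟨C, hC.isCircuit, hxC, fun y hy hyT =>
      (hT y (prefixSet_mono π htL (hCt hy)) hyT).elim⟩
  · exact .inl (hindep.subset (prefixSet_mono π (Nat.le_sub_one_of_lt hLt)))

lemma mrank_add_card_le {F : Finset α} (hFS : F ⊆ S)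
    (hF : ∀ x ∈ F, OnCircuitAvoiding (M.restrict S) x F) : mrank M S + #F ≤ #S := by
  classical
  set N := M.restrict S with hN
  have hspan : N.Spanning (S \ F : Finset α) := by
    rw [Matroid.spanning_iff_ground_subset_closure (by simp [hN])]
    intro x hxS
    by_cases hxF : x ∈ F
    · obtain ⟨C, hC, hxC, hCF⟩ := hF x hxF
      refine N.closure_subset_closure (fun y hy => ?_)
        (hC.mem_closure_sdiff_singleton_of_mem hxC)
      have hyS : y ∈ S := hC.subset_ground hy.1
      simpa [hyS] using fun hyF => hy.2 (hCF y hy.1 hyF)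
    · exact N.mem_closure_of_mem (by simpa [hxF] using mem_coe.1 hxS) (by simp [hN])
  have hrank : mrank M S ≤ #(S \ F) := by
    refine csSup_le' ?_
    rintro _ ⟨I, hI, hIS, rfl⟩
    have hIN : N.Indep I := Matroid.restrict_indep_iff.2 ⟨hI, hIS⟩
    have hcard : I.encard ≤ (S \ F : Finset α).card := by
      rw [← Set.encard_coe_eq_coe_finsetCard]
      exact hIN.encard_le_eRank.trans (hspan.eRk_eq.symm.trans_le (N.eRk_le_encard _))
    exact ENat.toNat_le_of_le_natCast hcard
  rw [← card_sdiff_add_card_eq_card hFS]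
  gcongr

end Matroid

section FirstCircuit

variable {ι α : Type*} {M : Matroid α} {S : Finset α}

lemma mrank_add_card_filter_onCircuitAvoiding_le (π : ι ≃ S) (D : Finset ι)
    [DecidablePred fun j => OnCircuitAvoiding (M.restrict S) (π j) (placed π D)] :
    mrank M S + #{j ∈ D | OnCircuitAvoiding (M.restrict S) (π j) (placed π D)} ≤ #S := by
  set F := {j ∈ D | OnCircuitAvoiding (M.restrict S) (π j) (placed π D)}
  have hFS : placed π F ⊆ S := fun y hy => by
    obtain ⟨j, -, rfl⟩ := mem_placed.1 hy
    exact (π j).2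
  rw [← card_map (s := F)]
  refine mrank_add_card_le hFS fun y hy => ?_
  obtain ⟨j, hj, rfl⟩ := mem_placed.1 hy
  exact OnCircuitAvoiding.antitone _ _ (placed_subset_placed (filter_subset _ D))
    (mem_filter.1 hj).2

lemma card_mul_le_card_sub_mrank [Fintype ι] [DecidableEq ι] [DecidableEq α] [Nonempty (ι ≃ S)]
    {D : Finset ι} {c : ℝ}
    (hc : ∀ x ∈ S, c ≤ placedProb S (OnCircuitAvoiding (M.restrict S) x) D) :
    #D * c ≤ (#S : ℝ) - mrank M S := by
  classical
  obtain ⟨π₀⟩ := ‹Nonempty (ι ≃ S)›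
  calc #D * c = ∑ _j ∈ D, c := by rw [sum_const, nsmul_eq_mul]
    _ ≤ ∑ j ∈ D, uniformProb univ fun π : ι ≃ S =>
          OnCircuitAvoiding (M.restrict S) (π j) (placed π D) :=
        sum_le_sum fun j hj => (le_expect ⟨π₀ j, mem_univ _⟩ fun x _ => hc x x.2).trans <|
          expect_placedProb_le (OnCircuitAvoiding.antitone _) (fun _ _ h => h.insert_self) hj
    _ = 𝔼 π : ι ≃ S, (#{j ∈ D | OnCircuitAvoiding (M.restrict S) (π j) (placed π D)} : ℝ) := by
        simp only [uniformProb, ← sum_boole]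
        exact (expect_sum_comm _ _ _).symm
    _ ≤ (#S : ℝ) - mrank M S := by
        refine expect_le ⟨π₀, mem_univ _⟩ fun π _ => le_sub_iff_add_le'.2 ?_
        exact_mod_cast mrank_add_card_filter_onCircuitAvoiding_le π D

/-- The probability that a uniformly random `ℓ`-subset of `S` is independent; thus `α(S)` is the
smallest `ℓ` at which it is at most `1/2`. -/
noncomputable def indepProb (M : Matroid α) (S : Finset α) (ℓ : ℕ) : ℝ :=
  uniformProb (S.powersetCard ℓ) fun T => M.Indep (T : Set α)

lemma ne_zero_of_indepProb_le_half {a : ℕ} (ha : indepProb M S a ≤ 1 / 2) : a ≠ 0 := by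
  rintro rfl
  norm_num [indepProb, uniformProb] at ha

lemma prefixSet_ordering (π : Fin #S ≃ S) (L : ℕ) :
    prefixSet (fun i => (π i : α)) L = placed π {i | (i : ℕ) < L} := by
  ext y
  simp [prefixSet, mem_placed]

variable [DecidableEq α]

/-- The probability that `x` belongs to the first circuit of a uniformly random ordering of `S`. -/
noncomputable def firstCircuitProb (M : Matroid α) (S : Finset α) (x : α) : ℝ :=
  uniformProb univ fun π : Fin #S ≃ S => MemFirstCircuit (M.restrict S) (fun i => (π i : α)) x

lemma firstCircuitProb_le (M : Matroid α) (S : Finset α) (x : α) (L : ℕ) :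
    firstCircuitProb M S x ≤
      placedProb S (fun T => M.Indep (T : Set α)) {i : Fin #S | (i : ℕ) < L} +
        placedProb S (OnCircuitAvoiding (M.restrict S) x) {i : Fin #S | ¬ (i : ℕ) < L} := by
  refine (uniformProb_mono fun π _ hπ => ?_).trans uniformProb_or_le
  beta_reduce
  rw [← prefixSet_ordering]
  refine (hπ.indep_or_onCircuitAvoiding L ?_).imp_left fun h => h.of_restrict
  rintro _ ⟨i, hi, rfl⟩
  simpa [apply_mem_placed] using hi

lemma half_le_placedProb_onCircuitAvoiding {k : ℕ} (hk : k ≠ 0) {A D : Finset (Fin #S)}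
    (hkAD : k * (#A + #D) ≤ #S) (hA : indepProb M S #A ≤ 1 / 2) {x : α}
    (hx : 2 * (1 / 2) ^ k ≤ firstCircuitProb M S x) :
    1 / 2 ≤ placedProb S (OnCircuitAvoiding (M.restrict S) x) D := by
  set p := placedProb S (fun T => M.Indep (T : Set α)) A
  set q := placedProb S (OnCircuitAvoiding (M.restrict S) x) D
  have : Nonempty (Fin #S ≃ S) := ⟨S.equivFin.symm⟩
  have hp : p ≤ 1 / 2 := (placedProb_eq_uniformProb_powersetCard A).trans_le hA
  rw [mul_add] at hkAD
  have hprefix : #{i : Fin #S | (i : ℕ) < k * #A} = k * #A := by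
    rw [Fin.card_filter_val_lt, min_eq_right (le_of_add_le_left hkAD)]
  have hsuffix : k * #D ≤ #{i : Fin #S | ¬ (i : ℕ) < k * #A} := by
    have := card_filter_add_card_filter_not (s := univ) fun i : Fin #S => (i : ℕ) < k * #A
    rw [hprefix, card_univ, Fintype.card_fin] at this
    omega
  by_contra! hq
  have : 2 * (1 / 2 : ℝ) ^ k < 2 * (1 / 2) ^ k :=
    calc 2 * (1 / 2 : ℝ) ^ k ≤ firstCircuitProb M S x := hx
      _ ≤ _ := firstCircuitProb_le M S x (k * #A)
      _ ≤ p ^ k + q ^ k :=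
          add_le_add (placedProb_le_pow (antitone_indep M) A k hprefix.ge)
            (placedProb_le_pow (OnCircuitAvoiding.antitone _ x) D k hsuffix)
      _ < (1 / 2) ^ k + (1 / 2) ^ k :=
          add_lt_add_of_le_of_lt (pow_le_pow_left₀ uniformProb_nonneg hp k)
            (pow_lt_pow_left₀ hq uniformProb_nonneg hk)
      _ = 2 * (1 / 2) ^ k := (two_mul _).symm
  exact this.false

lemma div_two_le_card_sub_mrank {k a d : ℕ} (hk : k ≠ 0) (hkad : k * (a + d) ≤ #S)
    (ha : indepProb M S a ≤ 1 / 2) (hx : ∀ x ∈ S, 2 * (1 / 2) ^ k ≤ firstCircuitProb M S x) :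
    (d : ℝ) / 2 ≤ #S - mrank M S := by
  have : Nonempty (Fin #S ≃ S) := ⟨S.equivFin.symm⟩
  have had : a + d ≤ #(univ : Finset (Fin #S)) := by
    rw [card_univ, Fintype.card_fin]
    exact (Nat.le_mul_of_pos_left _ (Nat.pos_of_ne_zero hk)).trans hkad
  obtain ⟨A, -, rfl⟩ := exists_subset_card_eq (le_of_add_le_left had)
  obtain ⟨D, -, rfl⟩ := exists_subset_card_eq (le_of_add_le_right had)
  rw [div_eq_mul_one_div]
  exact card_mul_le_card_sub_mrank fun x hxS =>
    half_le_placedProb_onCircuitAvoiding hk hkad ha (hx x hxS)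

end FirstCircuit

section Parameters

lemma two_le_of_le_div_logb {n a : ℕ} {s C : ℝ} (ha : a ≠ 0)
    (h : (a : ℝ) ≤ s / (C * Real.logb 2 n)) : (2 : ℝ) ≤ n := by
  by_contra! hn
  replace hn : n < 2 := mod_cast hn
  have hlog : Real.logb 2 (n : ℝ) = 0 := by interval_cases n <;> simp
  rw [hlog, mul_zero, div_zero] at h
  exact ha (by exact_mod_cast h.antisymm a.cast_nonneg)

lemma two_mul_half_pow_le {n : ℝ} (hn : 2 ≤ n) {k : ℕ} (hk : 11 * Real.logb 2 n ≤ k) :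
    2 * (1 / 2) ^ k ≤ 1 / n ^ 10 := by
  have : 0 < n := by linarith
  have hpow : 2 * n ^ 10 ≤ 2 ^ k :=
    calc 2 * n ^ 10 ≤ n * n ^ 10 := by gcongr
      _ = n ^ 11 := by ring
      _ ≤ 2 ^ k := by
        rw [← Real.logb_le_logb one_lt_two (by positivity) (by positivity), Real.logb_pow,
          Real.logb_pow, Real.logb_self_eq_one one_lt_two]
        simpa using hk
  rw [one_div_pow, ← div_eq_mul_one_div, div_le_div_iff₀ (by positivity) (by positivity), one_mul]
  exact hpow

lemma exists_block_count {s a : ℕ} {l : ℝ} (hl : 1 ≤ l) (ha : a ≠ 0)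
    (has : (a : ℝ) ≤ s / (100 * l)) :
    ∃ k d : ℕ, k ≠ 0 ∧ 11 * l ≤ k ∧ k * (a + d) ≤ s ∧ (s : ℝ) / (20 * l) ≤ d := by
  have ha1 : (1 : ℝ) ≤ a := mod_cast Nat.one_le_iff_ne_zero.2 ha
  rw [le_div_iff₀ (by positivity)] at has
  obtain ⟨k, hlk, hkl⟩ : ∃ k : ℕ, 11 * l ≤ k ∧ (k : ℝ) ≤ 12 * l :=
    ⟨⌈11 * l⌉₊, Nat.le_ceil _, by linarith [Nat.ceil_lt_add_one (a := 11 * l) (by positivity)]⟩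
  have hk : 0 < k := by exact_mod_cast (by linarith : (0 : ℝ) < k)
  have hka : a * k ≤ s := by exact_mod_cast (by nlinarith : (a : ℝ) * k ≤ s)
  obtain ⟨d, hd⟩ := Nat.exists_eq_add_of_le ((Nat.le_div_iff_mul_le hk).2 hka)
  refine ⟨k, d, hk.ne', hlk, hd ▸ Nat.mul_div_le s k, ?_⟩
  have hlt : (s : ℝ) < k * (a + d + 1) := by exact_mod_cast hd ▸ Nat.lt_mul_div_succ s hk
  have hbound : (s : ℝ) ≤ 12 * (l * d) + 24 / 100 * s :=
    calc (s : ℝ) ≤ k * (a + d + 1) := hlt.le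
      _ ≤ 12 * l * (a + d + a) := by gcongr
      _ = 12 * (l * d) + 24 / 100 * (a * (100 * l)) := by ring
      _ ≤ 12 * (l * d) + 24 / 100 * s := by gcongr
  have : 0 ≤ l * d := by positivity
  rw [div_le_iff₀ (by positivity)]
  linarith

end Parameters

section Counting

variable {ι α : Type*} {S : Finset α}

/-- The orderings of `S` as functions into the ambient type. -/
def orderingEmbedding (ι : Type*) (S : Finset α) : (ι ≃ S) ↪ (ι → α) where
  toFun π i := π i
  inj' _ _ h := Equiv.ext fun i => Subtype.ext (congrFun h i)

lemma filter_injective_eq_map_orderingEmbedding [Fintype ι] [DecidableEq ι] [Fintype α]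
    [DecidableEq α] (hι : Fintype.card ι = #S)
    [DecidablePred fun π : ι → α => Function.Injective π ∧ ∀ i, π i ∈ S] :
    univ.filter (fun π : ι → α => Function.Injective π ∧ ∀ i, π i ∈ S) =
      univ.map (orderingEmbedding ι S) := by
  ext π
  simp only [mem_filter, mem_univ, true_and, mem_map]
  refine ⟨fun ⟨hinj, hS⟩ => ?_, ?_⟩
  · have hbij : Function.Bijective fun i => (⟨π i, hS i⟩ : S) :=
      (Fintype.bijective_iff_injective_and_card _).2
        ⟨fun i j hij => hinj (congrArg Subtype.val hij), by rw [hι, Fintype.card_coe]⟩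
    exact ⟨Equiv.ofBijective _ hbij, rfl⟩
  · rintro ⟨π, rfl⟩
    exact ⟨Subtype.val_injective.comp π.injective, fun i => (π i).2⟩

lemma one_div_le_firstCircuitProb [Fintype α] [DecidableEq α] {M : Matroid α} {x : α}
    {c : ℝ}
    [DecidablePred fun π : Fin #S → α => Function.Injective π ∧ ∀ i, π i ∈ S]
    [DecidablePred fun π : Fin #S → α => Function.Injective π ∧ (∀ i, π i ∈ S) ∧
      MemFirstCircuit (M.restrict S) π x]
    (h : (#(univ.filter fun π : Fin #S → α => Function.Injective π ∧ ∀ i, π i ∈ S) : ℝ) ≤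
      c * #(univ.filter fun π : Fin #S → α => Function.Injective π ∧ (∀ i, π i ∈ S) ∧
        MemFirstCircuit (M.restrict S) π x)) :
    1 / c ≤ firstCircuitProb M S x := by
  classical
  have : Nonempty (Fin #S ≃ S) := ⟨S.equivFin.symm⟩
  simp only [← and_assoc, ← filter_filter] at h
  simp only [filter_injective_eq_map_orderingEmbedding (Fintype.card_fin _)] at h
  have hprob : firstCircuitProb M S x = _ :=
    (uniformProb_map (orderingEmbedding (Fin #S) S)
      fun π => MemFirstCircuit (M.restrict S) π x).symm.trans uniformProb_eq_card_div
  have hcard : (0 : ℝ) < #(univ.map (orderingEmbedding (Fin #S) S)) := by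
    simp [Fintype.card_pos]
  have hc : 0 < c := pos_of_mul_pos_left (hcard.trans_le h) (by positivity)
  rw [hprob, div_le_div_iff₀ hc hcard, one_mul, mul_comm]
  exact h

-- For `F : Finset (Finset α)` and `p : Set α → Prop`, `F.filter fun T => p ↑T` elaborates to a
-- filter of the image of `F` in `Finset (Set α)`, obtained from the monad structure of `Finset`.
open Classical in
lemma card_filter_bind_coe (F : Finset (Finset α)) (p : Set α → Prop) :
    #((F >>= fun T => pure (T : Set α)).filter p) =
      #(F.filter fun T : Finset α => p (T : Set α)) := by
  rw [bind_pure_comp, fmap_def, filter_image]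
  exact card_image_of_injective _ SetLike.coe_injective

end Counting

theorem stmt18_general {α : Type*} [DecidableEq α] {M : Matroid α} {S : Finset α} {n : ℝ} {a : ℕ}
    (hn : 2 ≤ n) (ha : indepProb M S a ≤ 1 / 2) (haS : a ≤ #S / (100 * Real.logb 2 n))
    (hx : ∀ x ∈ S, 1 / n ^ 10 ≤ firstCircuitProb M S x) :
    1 / 40 * #S / Real.logb 2 n ≤ (#S : ℝ) - mrank M S := by
  have hlog : 1 ≤ Real.logb 2 n := by
    rw [Real.le_logb_iff_rpow_le one_lt_two (by linarith)]
    simpa using hn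
  obtain ⟨k, d, hk, hlk, hkad, hd⟩ := exists_block_count hlog (ne_zero_of_indepProb_le_half ha) haS
  calc 1 / 40 * #S / Real.logb 2 n = #S / (20 * Real.logb 2 n) / 2 := by field_simp; ring
    _ ≤ d / 2 := by gcongr
    _ ≤ #S - mrank M S := div_two_le_card_sub_mrank hk hkad ha fun x hxS =>
        (two_mul_half_pow_le hn hlk).trans (hx x hxS)

-- If `α(S) ≤ |S|/(100·log n)` and every `x ∈ S` lies in the first circuit of a uniformly
-- random ordering of `S` with probability at least `1/n^10`, then
-- `|S| - rank(S) = Ω(|S|/log n)`.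
open Classical in
theorem stmt18 :
    ∃ c : ℝ, 0 < c ∧
      ∀ (α : Type) (_ : Fintype α) (_ : DecidableEq α) (M : Matroid α)
        (S : Finset α) (n : ℕ),
        n = M.E.ncard → (↑S : Set α) ⊆ M.E →
        ∀ a : ℕ,
          -- `a = α(S)`: smallest `ℓ` with independence probability at most `1/2`
          (2 * ((S.powersetCard a).filter (fun T => M.Indep ↑T)).card
              ≤ (S.powersetCard a).card) →
          (∀ ℓ < a, 2 * ((S.powersetCard ℓ).filter (fun T => M.Indep ↑T)).card
              > (S.powersetCard ℓ).card) →
          -- hypothesis (1): `α(S) ≤ |S|/(100·log n)`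
          (a : ℝ) ≤ (S.card : ℝ) / (100 * Real.logb 2 (n : ℝ)) →
          -- hypothesis (2): each `x ∈ S` is in the first circuit of a random ordering of
          -- `S` with probability at least `1/n^10`
          (∀ x ∈ S,
            ((Finset.univ.filter (fun π : Fin S.card → α =>
                Function.Injective π ∧ (∀ i, π i ∈ S))).card : ℝ)
              ≤ (n : ℝ) ^ 10 *
                ((Finset.univ.filter (fun π : Fin S.card → α =>
                  Function.Injective π ∧ (∀ i, π i ∈ S) ∧
                    MemFirstCircuit (M.restrict ↑S) π x)).card : ℝ)) →
          c * (S.card : ℝ) / Real.logb 2 (n : ℝ) ≤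
            (S.card : ℝ) - (mrank M ↑S : ℝ) := by
  refine ⟨1 / 40, by norm_num, fun α _ _ M S n _ _ a ha _ haS hx => ?_⟩
  have ha_half : indepProb M S a ≤ 1 / 2 :=
    uniformProb_le_half (by rwa [card_filter_bind_coe] at ha)
  exact stmt18_general (two_le_of_le_div_logb (ne_zero_of_indepProb_le_half ha_half) haS) ha_half
    haS fun x hxS => one_div_le_firstCircuitProb (hx x hxS)
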